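/- SP(n)/(n/log n) converges to ζ(2) − 1 as n → ∞; in particular, the SP numbers have an asymptotic distribution of the same order as the primes: SP(n) is asymptotic to (ζ(2) − 1)·n/log n. -/

import Mathlib

/-!
Every SP number is `p * a ^ 2` for a unique pair `(p, a)`, the prime `p` being the only one with odd
exponent, so `SP(n) = ∑_{a ≥ 2} π(n / a ^ 2)`. By the prime number theorem, for each fixed `a` the
summand divided by `n / log n` tends to `1 / a ^ 2`. Since `π(x) * log x / x` is bounded on
`x ≥ 1` and `log n = log (n / a ^ 2) + 2 * log a`, the normalised summands are `O(a ^ (-3 / 2))`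
uniformly in `n` (`SPProof.exists_spTerm_bound`). Dominated convergence for series then gives the limit
`∑_{a ≥ 2} 1 / a ^ 2 = ζ(2) - 1`.

The prime number theorem is derived from the non-vanishing of `ζ` on `Re s = 1` by a
Wiener–Ikehara argument with the Fejér kernel. Let `f u = ψ(exp u) * exp (-u) - 1`, which is bounded by
Chebyshev's estimate. Its Laplace transform at `z` is `-ζ'(s) / (s * ζ(s)) - 1 / (s - 1)` at
`s = 1 + z`, and this extends continuously to `Re z ≥ 0`. Integrating against the Fourier transform
of a triangle and letting `Re z → 0+` expresses the Fejér averages of `f` as Fourier coefficients of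
a continuous function of compact support. By the Riemann–Lebesgue lemma these averages
tend to zero (`SPProof.tendsto_fejer`). As `ψ` is monotone, `f` is slowly decreasing, and for such a
function convergence of the averages at all scales forces `f → 0`
(`SPProof.tendsto_zero_of_slowly_decreasing`). Passing from `ψ` to `θ` and `π` uses the comparisons
of Chebyshev's functions in Mathlib.
-/

open Filter

/-- A natural number is an SP number if it equals `p * a ^ 2` for a prime `p`
and a natural number `a ≥ 2`. -/
def IsSP (n : ℕ) : Prop := ∃ p a : ℕ, p.Prime ∧ 2 ≤ a ∧ n = p * a ^ 2

open scoped Classical in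
/-- `SPCount n` is the number of SP numbers less than or equal to `n`. -/
noncomputable def SPCount (n : ℕ) : ℕ := ((Finset.range (n + 1)).filter IsSP).card

namespace SPProof

open MeasureTheory

/-! ### The Fejér kernel and its Fourier transform -/

/-- The triangle function on `[-1, 1]`, the compactly supported side of the Fejér pair. -/
noncomputable def tent (t : ℝ) : ℝ := max 0 (1 - |t|)

/-- The Fejér kernel `(sin (u / 2) / (u / 2)) ^ 2`, with value `1` at `u = 0`: the Fourier transform
of `tent`. -/
noncomputable def fejer (u : ℝ) : ℝ := (Real.sinc (u / 2)) ^ 2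

lemma tent_nonneg (t : ℝ) : 0 ≤ tent t := le_max_left _ _

lemma tent_eq_zero {t : ℝ} (ht : 1 ≤ |t|) : tent t = 0 := max_eq_left (by linarith)

lemma continuous_tent : Continuous tent := by unfold tent; fun_prop

lemma integrable_tent : Integrable tent := by
  refine continuous_tent.integrable_of_hasCompactSupport
    (HasCompactSupport.intro (isCompact_Icc (a := (-1 : ℝ)) (b := 1)) fun t ht => ?_)
  refine tent_eq_zero ?_
  by_contra! h
  exact ht ⟨(abs_lt.1 h).1.le, (abs_lt.1 h).2.le⟩

lemma fejer_nonneg (u : ℝ) : 0 ≤ fejer u := sq_nonneg _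

lemma continuous_fejer : Continuous fejer := by
  unfold fejer
  have := Real.continuous_sinc
  fun_prop

lemma integrable_fejer : Integrable fejer := by
  have h : Integrable fun u : ℝ => 2 * (1 + (u / 2) ^ 2)⁻¹ :=
    (integrable_inv_one_add_sq.comp_div (R := (2 : ℝ)) two_ne_zero).const_mul 2
  refine h.mono' continuous_fejer.aestronglyMeasurable (.of_forall fun u => ?_)
  rw [Real.norm_of_nonneg (fejer_nonneg u), fejer]
  generalize u / 2 = v
  have h1 : Real.sinc v ^ 2 ≤ 1 := by
    rw [sq_le_one_iff_abs_le_one]; exact Real.abs_sinc_le_one v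
  have h2 : Real.sinc v ^ 2 * v ^ 2 ≤ 1 := by
    rcases eq_or_ne v 0 with rfl | hv
    · simp
    · rw [Real.sinc_of_ne_zero hv, ← mul_pow, div_mul_cancel₀ _ hv]
      exact Real.sin_sq_le_one v
  rw [← div_eq_mul_inv, le_div_iff₀ (by positivity)]
  linarith

lemma integral_fejer_pos : 0 < ∫ u, fejer u := by
  refine (integral_pos_iff_support_of_nonneg fejer_nonneg integrable_fejer).2 ?_
  refine (continuous_fejer.isOpen_support).measure_pos _ ⟨0, ?_⟩
  simp [fejer]

/-- `fejer` is the Fourier transform of `tent`. The identity also holds at `u = 0`, but it is only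
needed almost everywhere. -/
lemma integral_tent_mul_cexp {u : ℝ} (hu : u ≠ 0) :
    ∫ t : ℝ, (tent t : ℂ) * Complex.exp (Complex.I * u * t) = (fejer u : ℂ) := by
  have hw : Complex.I * u ≠ 0 := by simp [hu]
  have hcos : Complex.exp (Complex.I * u) + Complex.exp (-(Complex.I * u)) = 2 * Complex.cos u := by
    rw [Complex.cos]; ring_nf
  have hw2 : (Complex.I * u) ^ 2 = -(u : ℂ) ^ 2 := by rw [mul_pow, Complex.I_sq]; ring
  set w : ℂ := Complex.I * u
  have e1 : ∫ t : ℝ, (tent t : ℂ) * Complex.exp (w * t)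
      = ∫ t in (-1 : ℝ)..1, (tent t : ℂ) * Complex.exp (w * t) := by
    rw [intervalIntegral.integral_of_le (by norm_num)]
    refine (setIntegral_eq_integral_of_forall_compl_eq_zero fun t ht => ?_).symm
    rw [tent_eq_zero]
    · simp
    · by_contra! h
      exact ht ⟨(abs_lt.1 h).1, (abs_lt.1 h).2.le⟩
  have hc : Continuous fun t : ℝ => (tent t : ℂ) * Complex.exp (w * t) := by
    have := continuous_tent
    fun_prop
  rw [e1, ← intervalIntegral.integral_add_adjacent_intervals
    (hc.intervalIntegrable (-1) 0) (hc.intervalIntegrable 0 1)]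
  have hexp (t : ℝ) : HasDerivAt (fun t : ℝ => Complex.exp (w * t)) (Complex.exp (w * t) * w) t := by
    have := ((hasDerivAt_id (t : ℂ)).const_mul w).cexp.comp_ofReal
    simpa using this
  have hid (t : ℝ) : HasDerivAt (fun t : ℝ => (t : ℂ)) 1 t := (hasDerivAt_id (t : ℂ)).comp_ofReal
  have e2 : ∫ t in (-1 : ℝ)..0, (tent t : ℂ) * Complex.exp (w * t)
      = 1 / w - 1 / w ^ 2 + Complex.exp (-w) / w ^ 2 := by
    rw [intervalIntegral.integral_congr (g := fun t : ℝ => (1 + (t : ℂ)) * Complex.exp (w * t)),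
      intervalIntegral.integral_eq_sub_of_hasDerivAt
      (f := fun t : ℝ => (1 + (t : ℂ)) * Complex.exp (w * t) / w - Complex.exp (w * t) / w ^ 2)]
    · simp
    · intro t _
      refine (((((hid t).const_add 1).mul (hexp t)).div_const w).sub
        ((hexp t).div_const (w ^ 2))).congr_deriv ?_
      field_simp
      ring
    · exact Continuous.intervalIntegrable (by fun_prop) _ _
    · intro t ht
      rw [Set.uIcc_of_le (by norm_num)] at ht
      have : tent t = 1 + t := by
        rw [tent, abs_of_nonpos ht.2, max_eq_right] <;> linarith [ht.1]
      simp [this]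
  have e3 : ∫ t in (0 : ℝ)..1, (tent t : ℂ) * Complex.exp (w * t)
      = Complex.exp w / w ^ 2 - 1 / w - 1 / w ^ 2 := by
    rw [intervalIntegral.integral_congr (g := fun t : ℝ => (1 - (t : ℂ)) * Complex.exp (w * t)),
      intervalIntegral.integral_eq_sub_of_hasDerivAt
      (f := fun t : ℝ => (1 - (t : ℂ)) * Complex.exp (w * t) / w + Complex.exp (w * t) / w ^ 2)]
    · simp; ring
    · intro t _
      refine (((((hid t).const_sub 1).mul (hexp t)).div_const w).add
        ((hexp t).div_const (w ^ 2))).congr_deriv ?_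
      field_simp
      ring
    · exact Continuous.intervalIntegrable (by fun_prop) _ _
    · intro t ht
      rw [Set.uIcc_of_le (by norm_num)] at ht
      have : tent t = 1 - t := by
        rw [tent, abs_of_nonneg ht.1, max_eq_right]; linarith [ht.2]
      simp [this]
  have e4 : (fejer u : ℂ) = ((2 * Real.cos u - 2 : ℝ) : ℂ) / (-(u : ℂ) ^ 2) := by
    have : fejer u = (2 * Real.cos u - 2) / (-u ^ 2) := by
      rw [fejer, Real.sinc_of_ne_zero (by positivity), div_pow, Real.sin_sq_eq_half_sub,
        mul_div_cancel₀ _ two_ne_zero]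
      field_simp
      ring
    rw [this]; push_cast; ring
  rw [e2, e3, e4, ← hw2]
  push_cast
  rw [← hcos]
  ring

/-! ### Vanishing of Fejér averages from boundary behaviour of the Laplace transform -/

lemma integrable_fejer_scale {l : ℝ} (hl : 0 < l) (x : ℝ) :
    Integrable fun u => fejer (l * (u - x)) :=
  (integrable_fejer.comp_mul_left' hl.ne').comp_sub_right x

lemma integrableOn_mul_cexp {f : ℝ → ℝ} {M : ℝ} (hf : Measurable f) (hM : ∀ u, |f u| ≤ M)
    {z : ℂ} (hz : 0 < z.re) :
    IntegrableOn (fun u : ℝ => (f u : ℂ) * Complex.exp (-z * u)) (Set.Ioi 0) := by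
  refine Integrable.bdd_mul (c := M) ?_ hf.complex_ofReal.aestronglyMeasurable
    (.of_forall fun u => by simpa using hM u)
  exact integrableOn_exp_mul_complex_Ioi (by simpa using hz) 0

/-- Fubini: a Fejér average of `f u * exp (-ε * u)` is a compactly supported average of the Laplace
transform of `f` along the line `Re z = ε`. -/
lemma laplace_fejer {f : ℝ → ℝ} {M : ℝ} (hf : Measurable f) (hM : ∀ u, |f u| ≤ M)
    {l : ℝ} (hl : 0 < l) (x : ℝ) {ε : ℝ} (hε : 0 < ε) :
    ∫ u in Set.Ioi (0 : ℝ), (f u : ℂ) * Complex.exp (-ε * u) * fejer (l * (u - x))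
      = ∫ t : ℝ, (tent t : ℂ) * Complex.exp (-Complex.I * l * x * t) *
          ∫ u in Set.Ioi (0 : ℝ), (f u : ℂ) * Complex.exp (-(ε - Complex.I * l * t) * u) := by
  -- The formula `integral_tent_mul_cexp` is unavailable at the single point `u = x`.
  have hne : ∀ᵐ u ∂(volume.restrict (Set.Ioi (0 : ℝ))), u ≠ x :=
    ae_restrict_of_ae (by simp [ae_iff])
  calc _ = ∫ u in Set.Ioi (0 : ℝ), ∫ t : ℝ, (f u : ℂ) * Complex.exp (-ε * u) *
        ((tent t : ℂ) * Complex.exp (Complex.I * (l * (u - x) : ℝ) * t)) := by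
        refine integral_congr_ae (hne.mono fun u hu => ?_)
        simp only
        rw [integral_const_mul, integral_tent_mul_cexp]
        exact mul_ne_zero hl.ne' (sub_ne_zero.2 hu)
    _ = ∫ t : ℝ, ∫ u in Set.Ioi (0 : ℝ), (f u : ℂ) * Complex.exp (-ε * u) *
        ((tent t : ℂ) * Complex.exp (Complex.I * (l * (u - x) : ℝ) * t)) := by
        refine integral_integral_swap ?_
        have h1 := (integrableOn_mul_cexp hf hM (z := ε) (by simpa using hε)).mul_prod
          (integrable_tent.ofReal (𝕜 := ℂ))
        refine (h1.mul_bdd (c := 1) (g := fun p : ℝ × ℝ =>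
          Complex.exp (Complex.I * (l * (p.1 - x) : ℝ) * p.2)) ?_ ?_).congr ?_
        · exact Continuous.aestronglyMeasurable (by fun_prop)
        · refine .of_forall fun p => ?_
          rw [Complex.norm_exp]
          simp
        · refine .of_forall fun p => ?_
          simp [Function.uncurry, mul_assoc]
    _ = _ := by
        congr 1
        ext t
        rw [← integral_const_mul]
        congr 1
        ext u
        have : Complex.exp (-ε * u) * Complex.exp (Complex.I * (l * (u - x) : ℝ) * t)
          = Complex.exp (-Complex.I * l * x * t) *
            Complex.exp (-(ε - Complex.I * l * t) * u) := by
          rw [← Complex.exp_add, ← Complex.exp_add]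
          congr 1
          push_cast
          ring
        linear_combination (f u : ℂ) * tent t * this

/-- The limit `ε → 0+` of `laplace_fejer`, in which the Laplace transform is replaced by its continuous
extension `g` to the imaginary axis. -/
lemma boundary_fejer {f : ℝ → ℝ} {M : ℝ} (hf : Measurable f) (hM : ∀ u, |f u| ≤ M)
    {g : ℂ → ℂ} (hg : ContinuousOn g {z | 0 ≤ z.re})
    (hfg : ∀ z : ℂ, 0 < z.re →
      ∫ u in Set.Ioi (0 : ℝ), (f u : ℂ) * Complex.exp (-z * u) = g z)
    {l : ℝ} (hl : 0 < l) (x : ℝ) :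
    ∫ u in Set.Ioi (0 : ℝ), (f u : ℂ) * fejer (l * (u - x))
      = ∫ t : ℝ, (tent t : ℂ) * Complex.exp (-Complex.I * l * x * t) *
          g (-(Complex.I * l * t)) := by
  have hre (ε t : ℝ) : ((ε : ℂ) - Complex.I * l * t).re = ε := by simp
  have hev : ∀ᶠ ε : ℝ in nhdsWithin 0 (Set.Ioi 0), ε ∈ Set.Ioo (0 : ℝ) 1 :=
    Ioo_mem_nhdsGT one_pos
  have L : Tendsto (fun ε : ℝ => ∫ u in Set.Ioi (0 : ℝ),
      (f u : ℂ) * Complex.exp (-ε * u) * fejer (l * (u - x))) (nhdsWithin 0 (Set.Ioi 0))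
      (nhds (∫ u in Set.Ioi (0 : ℝ), (f u : ℂ) * fejer (l * (u - x)))) := by
    refine tendsto_integral_filter_of_dominated_convergence
      (fun u => M * fejer (l * (u - x))) ?_ ?_ ?_ ?_
    · refine .of_forall fun ε => Measurable.aestronglyMeasurable ?_
      have := continuous_fejer.measurable
      fun_prop
    · filter_upwards [hev] with ε hε
      refine (ae_restrict_iff' measurableSet_Ioi).2 (.of_forall fun u (hu : 0 < u) => ?_)
      rw [norm_mul, norm_mul, Complex.norm_real, Complex.norm_real,
        Real.norm_of_nonneg (fejer_nonneg _)]
      refine mul_le_mul_of_nonneg_right ?_ (fejer_nonneg _)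
      refine (mul_le_of_le_one_right (norm_nonneg _) ?_).trans (hM u)
      rw [Complex.norm_exp]
      have : 0 ≤ ε * u := (mul_pos hε.1 hu).le
      simpa using this
    · exact ((integrable_fejer_scale hl x).const_mul M).integrableOn
    · refine .of_forall fun u => ?_
      have : Continuous fun ε : ℝ =>
        (f u : ℂ) * Complex.exp (-ε * u) * fejer (l * (u - x)) := by fun_prop
      simpa using (this.tendsto 0).mono_left nhdsWithin_le_nhds
  have R : Tendsto (fun ε : ℝ => ∫ t : ℝ,
      (tent t : ℂ) * Complex.exp (-Complex.I * l * x * t) * g (ε - Complex.I * l * t))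
      (nhdsWithin 0 (Set.Ioi 0))
      (nhds (∫ t : ℝ, (tent t : ℂ) * Complex.exp (-Complex.I * l * x * t) *
          g (-(Complex.I * l * t)))) := by
    -- Only a compact part of the half-plane matters, since `tent` vanishes outside `[-1, 1]`.
    obtain ⟨C, hC⟩ : ∃ C : ℝ, ∀ p ∈ Set.Icc (0 : ℝ) 1 ×ˢ Set.Icc (-1 : ℝ) 1,
        ‖g ((p.1 : ℂ) - Complex.I * l * p.2)‖ ≤ C := by
      refine (isCompact_Icc.prod isCompact_Icc).exists_bound_of_continuousOn ?_
      refine hg.comp (Continuous.continuousOn (by fun_prop)) fun p hp => ?_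
      simpa [hre] using hp.1.1
    have hbound : ∀ ε : ℝ, ε ∈ Set.Ioo (0 : ℝ) 1 → ∀ t : ℝ,
        ‖(tent t : ℂ) * Complex.exp (-Complex.I * l * x * t) * g (ε - Complex.I * l * t)‖
          ≤ C * tent t := by
      intro ε hε t
      by_cases ht : 1 ≤ |t|
      · simp [tent_eq_zero ht]
      · push Not at ht
        have := hC (ε, t) ⟨⟨hε.1.le, hε.2.le⟩, (abs_lt.1 ht).1.le, (abs_lt.1 ht).2.le⟩
        have he : ‖Complex.exp (-Complex.I * l * x * t)‖ = 1 := by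
          rw [Complex.norm_exp]; simp
        rw [norm_mul, norm_mul, he, Complex.norm_real, Real.norm_of_nonneg (tent_nonneg _),
          mul_one, mul_comm]
        exact mul_le_mul_of_nonneg_right this (tent_nonneg _)
    refine tendsto_integral_filter_of_dominated_convergence (fun t => C * tent t) ?_ ?_ ?_ ?_
    · filter_upwards [hev] with ε hε
      have h1 : Continuous fun t : ℝ => g (ε - Complex.I * l * t) := by
        refine hg.comp_continuous (by fun_prop) fun t => ?_
        simpa [hre] using hε.1.le
      have := continuous_tent
      exact Continuous.aestronglyMeasurable
        (Continuous.mul (by fun_prop) h1)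
    · filter_upwards [hev] with ε hε
      exact .of_forall (hbound ε hε)
    · exact integrable_tent.const_mul C
    · refine .of_forall fun t => Tendsto.mul tendsto_const_nhds ?_
      have h0 : (0 : ℂ) - Complex.I * l * t ∈ {z : ℂ | 0 ≤ z.re} := by simp
      rw [← zero_sub]
      refine (hg _ h0).tendsto.comp (tendsto_nhdsWithin_iff.2 ⟨?_, ?_⟩)
      · have : Continuous fun ε : ℝ => (ε : ℂ) - Complex.I * l * t := by fun_prop
        simpa using (this.tendsto 0).mono_left nhdsWithin_le_nhds
      · filter_upwards [hev] with ε hε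
        simpa [hre] using hε.1.le
  refine tendsto_nhds_unique L (R.congr' ?_)
  filter_upwards [hev] with ε hε
  rw [laplace_fejer hf hM hl x hε.1]
  congr 1
  ext t
  rw [hfg _ (by rw [hre]; exact hε.1)]

/-- If the Laplace transform of a bounded function `f` extends continuously to `Re z = 0`, then the
Fejér averages of `f` of every fixed width tend to zero: by `boundary_fejer` they are Fourier
coefficients of an integrable function, so the Riemann–Lebesgue lemma applies. -/
lemma tendsto_fejer {f : ℝ → ℝ} {M : ℝ} (hf : Measurable f) (hM : ∀ u, |f u| ≤ M)
    {g : ℂ → ℂ} (hg : ContinuousOn g {z | 0 ≤ z.re})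
    (hfg : ∀ z : ℂ, 0 < z.re →
      ∫ u in Set.Ioi (0 : ℝ), (f u : ℂ) * Complex.exp (-z * u) = g z)
    {l : ℝ} (hl : 0 < l) :
    Tendsto (fun x : ℝ => ∫ u in Set.Ioi (0 : ℝ), f u * fejer (l * (u - x)))
      atTop (nhds 0) := by
  have h := Real.tendsto_integral_exp_smul_cocompact
    (fun t : ℝ => (tent t : ℂ) * g (-(Complex.I * l * t)))
  -- Mathlib normalises the Fourier character as `exp (2 * π * i * x)`, which forces this rescaling.
  have h2 : Tendsto (fun x : ℝ => l * x / (2 * Real.pi)) atTop (cocompact ℝ) := by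
    refine Tendsto.mono_right ?_ atTop_le_cocompact
    exact (tendsto_id.const_mul_atTop hl).atTop_div_const (by positivity)
  have h3 := h.comp h2
  refine (tendsto_ofReal_iff (α := ℝ)).1 (h3.congr fun x => ?_)
  have e : ((∫ u in Set.Ioi (0 : ℝ), f u * fejer (l * (u - x)) : ℝ) : ℂ)
      = ∫ u in Set.Ioi (0 : ℝ), (f u : ℂ) * fejer (l * (u - x)) := by
    rw [← integral_complex_ofReal]; simp
  refine Eq.trans ?_ e.symm
  rw [boundary_fejer hf hM hg hfg hl x]
  simp only [Function.comp]
  congr 1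
  ext t
  rw [Circle.smul_def, Real.fourierChar_apply, smul_eq_mul]
  have : ((2 * Real.pi * -(t * (l * x / (2 * Real.pi))) : ℝ) : ℂ) * Complex.I
      = -Complex.I * l * x * t := by
    have : 2 * Real.pi * -(t * (l * x / (2 * Real.pi))) = - (t * (l * x)) := by
      field_simp
    rw [this]; push_cast; ring
  rw [this]
  ring

/-! ### The Tauberian step -/

lemma tendsto_fejer_tail {δ : ℝ} (hδ : 0 < δ) :
    Tendsto (fun l : ℝ => ∫ v, {v | l * δ < |v|}.indicator fejer v) atTop (nhds 0) := by
  have hm (l : ℝ) : MeasurableSet {v : ℝ | l * δ < |v|} :=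
    measurableSet_lt measurable_const continuous_abs.measurable
  rw [show (0 : ℝ) = ∫ _ : ℝ, (0 : ℝ) by simp]
  refine tendsto_integral_filter_of_dominated_convergence fejer ?_ ?_ integrable_fejer ?_
  · exact .of_forall fun l =>
      (integrable_fejer.indicator (hm l)).aestronglyMeasurable
  · refine .of_forall fun l => .of_forall fun v => ?_
    rw [Real.norm_of_nonneg (Set.indicator_nonneg (fun _ _ => fejer_nonneg _) _)]
    exact Set.indicator_le_self' (fun _ _ => fejer_nonneg _) _
  · refine .of_forall fun v => tendsto_const_nhds.congr' ?_
    filter_upwards [eventually_gt_atTop (|v| / δ)] with l hl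
    rw [div_lt_iff₀ hδ] at hl
    rw [Set.indicator_of_notMem]
    simpa using hl.le

/-- A bounded function whose Fejér averages tend to zero cannot stay above `c > 0` on intervals of fixed
radius `δ` arbitrarily far out: for `l` large, almost all the mass of the kernel
`fejer (l * (u - x))` lies in `[x - δ, x + δ]`. -/
lemma not_large_on_interval {f : ℝ → ℝ} {M : ℝ} (hf : Measurable f) (hM : ∀ u, |f u| ≤ M)
    (hlim : ∀ l : ℝ, 0 < l → Tendsto
      (fun x : ℝ => ∫ u in Set.Ioi (0 : ℝ), f u * fejer (l * (u - x))) atTop (nhds 0))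
    {c δ : ℝ} (hc : 0 < c) (hδ : 0 < δ) :
    ∀ᶠ x in atTop, ∃ y ∈ Set.Icc (x - δ) (x + δ), f y < c := by
  have hM0 : 0 ≤ M := (abs_nonneg _).trans (hM 0)
  set A : ℝ := ∫ u, fejer u with hA
  have hA0 : 0 < A := integral_fejer_pos
  have hcA : 0 < c * A := mul_pos hc hA0
  -- Choose `l` so large that the tail of the kernel beyond `l * δ` is small compared with `c * A`.
  obtain ⟨l, hl, hl0⟩ : ∃ l : ℝ, (∫ v, {v | l * δ < |v|}.indicator fejer v)
      < c * A / (2 * (c + M)) ∧ 0 < l :=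
    (((tendsto_fejer_tail hδ).eventually_lt_const (by positivity)).and
      (eventually_gt_atTop 0)).exists
  set T : ℝ := ∫ v, {v | l * δ < |v|}.indicator fejer v with hT
  have hcT : (c + M) * T < c * A / 2 := by
    have := (lt_div_iff₀ (by positivity)).1 hl
    linarith
  have hm : MeasurableSet {v : ℝ | l * δ < |v|} :=
    measurableSet_lt measurable_const continuous_abs.measurable
  have hTi := integrable_fejer.indicator hm
  have hlow : 0 < l⁻¹ * (c * A - (c + M) * T) :=
    mul_pos (inv_pos.2 hl0) (by linarith)
  filter_upwards [(hlim l hl0).eventually_lt_const hlow, eventually_gt_atTop δ] with x hx hxδ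
  by_contra! hcon
  refine absurd hx (not_lt.2 ?_)
  have hTs : Integrable fun u => {v | l * δ < |v|}.indicator fejer (l * (u - x)) :=
    (hTi.comp_mul_left' hl0.ne').comp_sub_right x
  have e1 : ∫ u, fejer (l * (u - x)) = l⁻¹ * A := by
    rw [integral_sub_right_eq_self (fun u => fejer (l * u)) x,
      Measure.integral_comp_mul_left, abs_of_pos (inv_pos.2 hl0), smul_eq_mul]
  have e2 : ∫ u, {v | l * δ < |v|}.indicator fejer (l * (u - x)) = l⁻¹ * T := by
    rw [integral_sub_right_eq_self
      (fun u => {v | l * δ < |v|}.indicator fejer (l * u)) x,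
      Measure.integral_comp_mul_left, abs_of_pos (inv_pos.2 hl0), smul_eq_mul]
  -- If `c ≤ f` on `[x - δ, x + δ]` then `f ≥ c - (c + M) * 1_{|u - x| > δ}` on the positive half-line;
  -- extending `f` by zero to the left keeps this bound.
  calc l⁻¹ * (c * A - (c + M) * T)
      = ∫ u, (c * fejer (l * (u - x))
          - (c + M) * {v | l * δ < |v|}.indicator fejer (l * (u - x))) := by
        rw [integral_sub ((integrable_fejer_scale hl0 x).const_mul c) (hTs.const_mul _),
          integral_const_mul, integral_const_mul, e1, e2]
        ring
    _ ≤ ∫ u, (Set.Ioi (0 : ℝ)).indicator (fun u => f u * fejer (l * (u - x))) u := by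
        refine integral_mono (((integrable_fejer_scale hl0 x).const_mul c).sub
          (hTs.const_mul _)) (Integrable.indicator ?_ measurableSet_Ioi) fun u => ?_
        · exact (integrable_fejer_scale hl0 x).bdd_mul (c := M) hf.aestronglyMeasurable
            (.of_forall hM)
        · have hK := fejer_nonneg (l * (u - x))
          by_cases hu : l * δ < |l * (u - x)|
          · have : -(M * fejer (l * (u - x))) ≤
                (Set.Ioi (0 : ℝ)).indicator (fun u => f u * fejer (l * (u - x))) u := by
              by_cases h0 : u ∈ Set.Ioi (0 : ℝ)
              · rw [Set.indicator_of_mem h0, ← neg_mul]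
                exact mul_le_mul_of_nonneg_right (abs_le.1 (hM u)).1 hK
              · rw [Set.indicator_of_notMem h0]
                have := mul_nonneg hM0 hK
                linarith
            simp only
            rw [Set.indicator_of_mem (by exact hu)]
            linarith
          · simp only
            rw [Set.indicator_of_notMem (by exact hu)]
            rw [abs_mul, abs_of_pos hl0, mul_lt_mul_iff_right₀ hl0, not_lt, abs_le] at hu
            rw [Set.indicator_of_mem (by rw [Set.mem_Ioi]; linarith), mul_zero, sub_zero]
            exact mul_le_mul_of_nonneg_right
              (hcon u ⟨by linarith, by linarith⟩) hK
    _ = _ := integral_indicator measurableSet_Ioi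

/-- A bounded, slowly decreasing function all of whose Fejér averages tend to zero tends to zero. If it
is large (resp. very negative) at a point, it stays so for a while after (resp. before) that point,
which `not_large_on_interval` excludes. -/
theorem tendsto_zero_of_slowly_decreasing {f : ℝ → ℝ} {M : ℝ} (hf : Measurable f)
    (hM : ∀ u, |f u| ≤ M)
    (hlim : ∀ l : ℝ, 0 < l → Tendsto
      (fun x : ℝ => ∫ u in Set.Ioi (0 : ℝ), f u * fejer (l * (u - x))) atTop (nhds 0))
    (hslow : ∀ η : ℝ, 0 < η → ∃ δ : ℝ, 0 < δ ∧ ∀ x y, x ≤ y → y ≤ x + δ → f x - η ≤ f y) :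
    Tendsto f atTop (nhds 0) := by
  rw [tendsto_order]
  have hneg : ∀ l : ℝ, 0 < l → Tendsto
      (fun x : ℝ => ∫ u in Set.Ioi (0 : ℝ), (-f u) * fejer (l * (u - x))) atTop (nhds 0) := by
    intro l hl
    have := (hlim l hl).neg
    simpa [neg_mul, integral_neg] using this
  constructor
  · intro c hc
    obtain ⟨δ, hδ, h⟩ := hslow (-c / 2) (by linarith)
    -- A very negative value at `x` forces `f` to be negative on `[x - δ, x]`, centred at `x - δ / 2`.
    have h1 := not_large_on_interval (c := -c / 2) (δ := δ / 2) hf.neg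
      (fun u => by simpa using hM u) hneg (by linarith) (by linarith)
    filter_upwards [(tendsto_atTop_add_const_right _ (-(δ / 2)) tendsto_id).eventually h1]
      with x hx
    obtain ⟨y, ⟨hy1, hy2⟩, hy⟩ := hx
    simp only [id, Pi.neg_apply] at hy1 hy2 hy
    have := h y x (by linarith) (by linarith)
    linarith
  · intro c hc
    obtain ⟨δ, hδ, h⟩ := hslow (c / 2) (by linarith)
    -- A large value at `x` forces `f` to be large on `[x, x + δ]`, centred at `x + δ / 2`.
    have h1 := not_large_on_interval (c := c / 2) (δ := δ / 2) hf hM hlim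
      (by linarith) (by linarith)
    filter_upwards [(tendsto_atTop_add_const_right _ (δ / 2) tendsto_id).eventually h1]
      with x hx
    obtain ⟨y, ⟨hy1, hy2⟩, hy⟩ := hx
    simp only [id] at hy1 hy2
    have := h x y (by linarith) (by linarith)
    linarith

/-! ### Chebyshev's function and the logarithmic derivative of zeta -/

/-- The relative error `ψ(x) / x - 1` of Chebyshev's function, in the logarithmic variable `x = exp u`. -/
noncomputable def psiErr (u : ℝ) : ℝ := Chebyshev.psi (Real.exp u) * Real.exp (-u) - 1

lemma psi_mul_exp_le (u : ℝ) :
    Chebyshev.psi (Real.exp u) * Real.exp (-u) ≤ Real.log 4 + 4 := by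
  rw [Real.exp_neg, ← div_eq_mul_inv, div_le_iff₀ (Real.exp_pos u)]
  exact Chebyshev.psi_le_const_mul_self (Real.exp_pos u).le

lemma psi_mul_exp_nonneg (u : ℝ) : 0 ≤ Chebyshev.psi (Real.exp u) * Real.exp (-u) :=
  mul_nonneg (Chebyshev.psi_nonneg _) (Real.exp_pos _).le

lemma measurable_psiErr : Measurable psiErr := by
  have := Chebyshev.psi_mono.measurable
  unfold psiErr
  fun_prop

lemma abs_psiErr_le (u : ℝ) : |psiErr u| ≤ Real.log 4 + 4 := by
  have h1 := psi_mul_exp_le u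
  have h2 := psi_mul_exp_nonneg u
  have h3 : 0 ≤ Real.log 4 := Real.log_nonneg (by norm_num)
  rw [abs_le, psiErr]
  constructor <;> linarith

/-- Slow decrease of `psiErr`: `ψ` is monotone, and `exp (-u)` varies slowly in the relative sense. -/
lemma psiErr_slow (η : ℝ) (hη : 0 < η) :
    ∃ δ : ℝ, 0 < δ ∧ ∀ x y, x ≤ y → y ≤ x + δ → psiErr x - η ≤ psiErr y := by
  have h3 : 0 ≤ Real.log 4 := Real.log_nonneg (by norm_num)
  refine ⟨η / (Real.log 4 + 4), by positivity, fun x y hxy hy => ?_⟩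
  have hd : (y - x) * (Real.log 4 + 4) ≤ η := by
    rw [← le_div_iff₀ (by positivity)]; linarith
  have h1 := psi_mul_exp_le x
  have h2 := psi_mul_exp_nonneg x
  have key : Chebyshev.psi (Real.exp x) * Real.exp (-x) * (1 - (y - x))
      ≤ Chebyshev.psi (Real.exp y) * Real.exp (-y) := by
    calc _ ≤ Chebyshev.psi (Real.exp x) * Real.exp (-x) * Real.exp (-(y - x)) := by
          refine mul_le_mul_of_nonneg_left ?_ h2
          have := Real.add_one_le_exp (-(y - x))
          linarith
      _ = Chebyshev.psi (Real.exp x) * Real.exp (-y) := by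
          rw [mul_assoc, ← Real.exp_add]; congr 2; ring
      _ ≤ _ := mul_le_mul_of_nonneg_right
          (Chebyshev.psi_mono (Real.exp_le_exp.2 hxy)) (Real.exp_pos _).le
  have : Chebyshev.psi (Real.exp x) * Real.exp (-x) * (y - x) ≤ η :=
    (mul_le_mul_of_nonneg_right h1 (sub_nonneg.2 hxy)).trans (by linarith)
  unfold psiErr
  linarith

open ArithmeticFunction vonMangoldt in
lemma LSeries_vonMangoldt_eq_integral {s : ℂ} (hs : 1 < s.re) :
    LSeries (fun n => (vonMangoldt n : ℂ)) s
      = s * ∫ t in Set.Ioi (1 : ℝ), (Chebyshev.psi t : ℂ) * (t : ℂ) ^ (-(s + 1)) := by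
  have hO : (fun n : ℕ => ∑ k ∈ Finset.Icc 1 n, vonMangoldt k) =O[atTop]
      fun n : ℕ => (n : ℝ) ^ (1 : ℝ) := by
    refine Asymptotics.IsBigO.of_bound (Real.log 4 + 4) (.of_forall fun n => ?_)
    have : ∑ k ∈ Finset.Icc 1 n, vonMangoldt k = Chebyshev.psi n := by
      simp [Chebyshev.psi, ← Finset.Icc_add_one_left_eq_Ioc]
    rw [this, Real.norm_of_nonneg (Chebyshev.psi_nonneg _), Real.rpow_one,
      Real.norm_of_nonneg (Nat.cast_nonneg _)]
    exact Chebyshev.psi_le_const_mul_self (Nat.cast_nonneg _)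
  rw [LSeries_eq_mul_integral_of_nonneg (fun n => vonMangoldt n) zero_le_one hs hO
    fun n => vonMangoldt_nonneg]
  congr 2
  ext t
  congr 1
  simp [Chebyshev.psi, ← Finset.Icc_add_one_left_eq_Ioc]

/-- The Laplace transform of `ψ(exp u) * exp (-u)` is `-ζ'(s) / (s * ζ(s))` at `s = 1 + z`; the logarithmic
derivative of zeta appears as the Dirichlet series of the von Mangoldt function. -/
lemma integral_psi_exp {z : ℂ} (hz : 0 < z.re) :
    ∫ u in Set.Ioi (0 : ℝ), ((Chebyshev.psi (Real.exp u) * Real.exp (-u) : ℝ) : ℂ)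
        * Complex.exp (-z * u)
      = LSeries (fun n => (ArithmeticFunction.vonMangoldt n : ℂ)) (1 + z) / (1 + z) := by
  have hs : 1 < (1 + z).re := by simpa using hz
  have hs0 : 1 + z ≠ 0 := by
    intro h; rw [h] at hs; norm_num at hs
  -- Substitute `t = exp u` in the integral representation of the Dirichlet series.
  rw [LSeries_vonMangoldt_eq_integral hs, mul_div_cancel_left₀ _ hs0, ← Real.exp_zero,
    ← integral_comp_exp_Ioi]
  congr 1
  ext u
  rw [Complex.cpow_def_of_ne_zero (by simp), ← Complex.ofReal_log (Real.exp_pos u).le,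
    Real.log_exp, Complex.real_smul]
  push_cast
  have : Complex.exp (-(u : ℂ)) * Complex.exp (-z * u)
    = Complex.exp u * Complex.exp (u * -(1 + z + 1)) := by
    rw [← Complex.exp_add, ← Complex.exp_add]; congr 1; ring
  linear_combination (Chebyshev.psi (Real.exp u) : ℂ) * this

/-- The continuous extension to `Re z ≥ 0` of `-ζ'(s) / (s * ζ(s)) - 1 / (s - 1)`, where `s = 1 + z`.
The residue class function for modulus `1` is the extension of `-ζ'(s) / ζ(s) - 1 / (s - 1)` to
`Re s ≥ 1`. -/
noncomputable def boundaryExt (z : ℂ) : ℂ :=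
  (ArithmeticFunction.vonMangoldt.LFunctionResidueClassAux (1 : ZMod 1) (1 + z) - 1) / (1 + z)

/-- This is where the non-vanishing of `ζ` on the line `Re s = 1` enters. -/
lemma continuousOn_boundaryExt : ContinuousOn boundaryExt {z | 0 ≤ z.re} := by
  unfold boundaryExt
  refine ContinuousOn.div (ContinuousOn.sub ?_ continuousOn_const) (by fun_prop) ?_
  · refine (ArithmeticFunction.vonMangoldt.continuousOn_LFunctionResidueClassAux
      (1 : ZMod 1)).comp (by fun_prop) fun z hz => ?_
    simpa using hz
  · intro z (hz : 0 ≤ z.re) h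
    have := congrArg Complex.re h
    simp at this
    linarith

lemma integral_psiErr {z : ℂ} (hz : 0 < z.re) :
    ∫ u in Set.Ioi (0 : ℝ), (psiErr u : ℂ) * Complex.exp (-z * u) = boundaryExt z := by
  have hz0 : z ≠ 0 := by rintro rfl; simp at hz
  have hs0 : 1 + z ≠ 0 := by
    intro h
    have := congrArg Complex.re h
    simp at this
    linarith
  have hexp : IntegrableOn (fun u : ℝ => Complex.exp (-z * u)) (Set.Ioi 0) :=
    integrableOn_exp_mul_complex_Ioi (by simpa using hz) 0
  have hpsi : IntegrableOn (fun u : ℝ =>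
      ((Chebyshev.psi (Real.exp u) * Real.exp (-u) : ℝ) : ℂ) * Complex.exp (-z * u))
      (Set.Ioi 0) := by
    refine hexp.bdd_mul (c := Real.log 4 + 4) ?_ (.of_forall fun u => ?_)
    · have := Chebyshev.psi_mono.measurable
      exact Measurable.aestronglyMeasurable (by fun_prop)
    · rw [Complex.norm_real, Real.norm_of_nonneg (psi_mul_exp_nonneg u)]
      exact psi_mul_exp_le u
  have e : ∀ u : ℝ, (psiErr u : ℂ) * Complex.exp (-z * u)
      = ((Chebyshev.psi (Real.exp u) * Real.exp (-u) : ℝ) : ℂ) * Complex.exp (-z * u)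
        - Complex.exp (-z * u) := by
    intro u; rw [psiErr]; push_cast; ring
  simp_rw [e]
  rw [integral_sub hpsi hexp, integral_psi_exp hz, integral_exp_mul_complex_Ioi
    (by simpa using hz)]
  have h := ArithmeticFunction.vonMangoldt.eqOn_LFunctionResidueClassAux
    (a := (1 : ZMod 1)) isUnit_one (show 1 + z ∈ {s : ℂ | 1 < s.re} by simpa using hz)
  -- Modulo `1` there is a single residue class.
  have hL : (fun n : ℕ => (ArithmeticFunction.vonMangoldt.residueClass (1 : ZMod 1) n : ℂ))
      = fun n => (ArithmeticFunction.vonMangoldt n : ℂ) := by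
    ext n
    rw [ArithmeticFunction.vonMangoldt.residueClass, Set.indicator_of_mem]
    exact Subsingleton.elim _ _
  rw [boundaryExt, h]
  simp only
  rw [hL]
  simp
  field_simp
  ring

/-! ### The prime number theorem -/

/-- The prime number theorem, in the form `ψ(exp u) / exp u → 1`. -/
theorem tendsto_psiErr : Tendsto psiErr atTop (nhds 0) :=
  tendsto_zero_of_slowly_decreasing measurable_psiErr abs_psiErr_le
    (fun _ hl => tendsto_fejer measurable_psiErr abs_psiErr_le continuousOn_boundaryExt
      (fun _ hz => integral_psiErr hz) hl) psiErr_slow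

lemma tendsto_psi_div : Tendsto (fun x : ℝ => Chebyshev.psi x / x) atTop (nhds 1) := by
  have h := (tendsto_psiErr.comp Real.tendsto_log_atTop).add_const 1
  rw [zero_add] at h
  refine h.congr' ?_
  filter_upwards [eventually_gt_atTop 0] with x hx
  simp only [Function.comp, psiErr]
  rw [Real.exp_neg, Real.exp_log hx, div_eq_mul_inv]
  ring

lemma tendsto_theta_div : Tendsto (fun x : ℝ => Chebyshev.theta x / x) atTop (nhds 1) := by
  have h1 : Tendsto (fun x : ℝ => (Chebyshev.psi x - Chebyshev.theta x) / x) atTop (nhds 0) := by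
    have : (fun x : ℝ => √x) =o[atTop] fun x : ℝ => x := by
      refine (Asymptotics.isLittleO_iff_tendsto' ?_).2 ?_
      · filter_upwards [eventually_gt_atTop 0] with x hx h
        exact absurd h hx.ne'
      · refine (tendsto_inv_atTop_zero.comp Real.tendsto_sqrt_atTop).congr fun x => ?_
        simp [Real.sqrt_div_self']
    exact (Chebyshev.isBigO_psi_sub_theta_sqrt.trans_isLittleO this).tendsto_div_nhds_zero
  have h2 := tendsto_psi_div.sub h1
  rw [sub_zero] at h2
  refine h2.congr fun x => ?_
  ring

/-- The prime number theorem: `π(x) * log x / x → 1`. -/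
theorem tendsto_primeCounting_mul_log_div :
    Tendsto (fun x : ℝ => (Nat.primeCounting ⌊x⌋₊ : ℝ) * Real.log x / x) atTop (nhds 1) := by
  have h1 : Tendsto (fun x : ℝ =>
      (Nat.primeCounting ⌊x⌋₊ - Chebyshev.theta x / Real.log x) / (x / Real.log x))
      atTop (nhds 0) := by
    refine (Chebyshev.primeCounting_sub_theta_div_log_isBigO.trans_isLittleO
      ((Asymptotics.isLittleO_iff_tendsto' ?_).2 ?_)).tendsto_div_nhds_zero
    · filter_upwards [eventually_gt_atTop 1] with x hx h
      have := Real.log_pos hx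
      exact absurd h (by positivity)
    · refine (tendsto_inv_atTop_zero.comp Real.tendsto_log_atTop).congr' ?_
      filter_upwards [eventually_gt_atTop 1] with x hx
      have := Real.log_pos hx
      simp only [Function.comp]
      field_simp
  have h2 := h1.add tendsto_theta_div
  rw [zero_add] at h2
  refine h2.congr' ?_
  filter_upwards [eventually_gt_atTop 1] with x hx
  have := Real.log_pos hx
  field_simp
  ring

/-! ### Counting SP numbers -/

/-- Uniqueness of the representation `p * a ^ 2`: `p` is the only prime with odd exponent. -/
lemma sp_repr_unique {p q a b : ℕ} (hp : p.Prime) (hq : q.Prime) (ha : a ≠ 0) (hb : b ≠ 0)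
    (h : p * a ^ 2 = q * b ^ 2) : p = q ∧ a = b := by
  have hpq : p = q := by
    by_contra hne
    -- Compare the parity of the exponent of `p` on both sides.
    have := congrArg (fun n => n.factorization p) h
    simp only [Nat.factorization_mul hp.ne_zero (pow_ne_zero 2 ha),
      Nat.factorization_mul hq.ne_zero (pow_ne_zero 2 hb), Nat.factorization_pow,
      Finsupp.add_apply, Finsupp.smul_apply, hp.factorization, hq.factorization,
      Finsupp.single_eq_same, Finsupp.single_eq_of_ne hne, smul_eq_mul] at this
    omega
  subst hpq
  exact ⟨rfl, Nat.pow_left_injective two_ne_zero (Nat.eq_of_mul_eq_mul_left hp.pos h)⟩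

/-- Each `a ≥ 2` contributes one SP number for every prime `p ≤ n / a ^ 2`, and by uniqueness of the
representation none is counted twice. -/
lemma SPCount_eq_sum (n : ℕ) :
    SPCount n = ∑ a ∈ Finset.Icc 2 n, Nat.primeCounting (n / a ^ 2) := by
  classical
  have h : (Finset.range (n + 1)).filter IsSP
      = ((Finset.Icc 2 n).sigma fun a => Nat.primesLE (n / a ^ 2)).image
        fun x => x.2 * x.1 ^ 2 := by
    ext m
    simp only [Finset.mem_filter, Finset.mem_range, Finset.mem_image, Finset.mem_sigma,
      Finset.mem_Icc, Nat.mem_primesLE, IsSP]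
    constructor
    · rintro ⟨hm, p, a, hp, ha, rfl⟩
      have hle : p * a ^ 2 ≤ n := by omega
      have ha2 : a ≤ a ^ 2 := Nat.le_self_pow two_ne_zero a
      exact ⟨⟨a, p⟩, ⟨⟨ha, (ha2.trans (Nat.le_mul_of_pos_left _ hp.pos)).trans hle⟩,
        (Nat.le_div_iff_mul_le (by positivity)).2 hle, hp⟩, rfl⟩
    · rintro ⟨⟨a, p⟩, ⟨⟨ha, -⟩, hp, hpp⟩, rfl⟩
      have := (Nat.le_div_iff_mul_le (by positivity)).1 hp
      exact ⟨by simpa using Nat.lt_succ_of_le this, p, a, hpp, ha, rfl⟩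
  have hcard : SPCount n = ((Finset.range (n + 1)).filter IsSP).card := by
    unfold SPCount; congr
  rw [hcard, h, Finset.card_image_of_injOn, Finset.card_sigma]
  · simp
  · rintro ⟨a, p⟩ hx ⟨b, q⟩ hy hxy
    simp only [Finset.coe_sigma, Set.mem_sigma_iff, Finset.mem_coe, Finset.mem_Icc,
      Nat.mem_primesLE] at hx hy
    obtain ⟨rfl, rfl⟩ := sp_repr_unique hx.2.2 hy.2.2
      (show a ≠ 0 by omega) (show b ≠ 0 by omega) hxy
    rfl

/-- The contribution of the square `a ^ 2` to `SP(n) / (n / log n)`; zero for `a < 2`. -/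
noncomputable def spTerm (n a : ℕ) : ℝ :=
  if 2 ≤ a then (Nat.primeCounting (n / a ^ 2) : ℝ) * Real.log n / n else 0

lemma SPCount_div_eq_tsum (n : ℕ) :
    (SPCount n : ℝ) / ((n : ℝ) / Real.log n) = ∑' a, spTerm n a := by
  rw [tsum_eq_sum (s := Finset.Icc 2 n), SPCount_eq_sum, div_div_eq_mul_div, Nat.cast_sum,
    Finset.sum_mul, Finset.sum_div]
  · refine Finset.sum_congr rfl fun a ha => ?_
    rw [spTerm, if_pos (Finset.mem_Icc.1 ha).1]
  · intro a ha
    rw [spTerm]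
    split_ifs with h2
    · have hn : n < a ^ 2 := by
        have : n < a := by
          by_contra! h
          exact ha (Finset.mem_Icc.2 ⟨h2, h⟩)
        exact this.trans_le (Nat.le_self_pow two_ne_zero a)
      simp [Nat.div_eq_of_lt hn]
    · rfl

/-- With `x = n / a ^ 2`, split `log n = log x + 2 * log a`. -/
lemma spTerm_eq {n a : ℕ} (ha : 2 ≤ a) (hn : n ≠ 0) :
    spTerm n a = 1 / (a : ℝ) ^ 2 *
      ((Nat.primeCounting ⌊(n : ℝ) / (a : ℝ) ^ 2⌋₊ : ℝ) * Real.log (n / (a : ℝ) ^ 2)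
          / (n / (a : ℝ) ^ 2)
        + 2 * Real.log a * ((Nat.primeCounting ⌊(n : ℝ) / (a : ℝ) ^ 2⌋₊ : ℝ)
          / (n / (a : ℝ) ^ 2))) := by
  have hfl : ⌊(n : ℝ) / (a : ℝ) ^ 2⌋₊ = n / a ^ 2 := by
    rw [← Nat.cast_pow, Nat.floor_div_eq_div]
  have ha0 : (a : ℝ) ≠ 0 := by positivity
  have hn0 : (n : ℝ) ≠ 0 := by positivity
  rw [spTerm, if_pos ha, hfl, Real.log_div hn0 (pow_ne_zero 2 ha0), Real.log_pow]
  push_cast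
  field_simp
  ring

/-- The termwise limit is `1 / a ^ 2` for `a ≥ 2` and zero otherwise. The subtraction corrects the value at
`a = 1`; at `a = 0` the convention `1 / 0 = 0` already gives zero. -/
lemma tendsto_spTerm (a : ℕ) :
    Tendsto (fun n => spTerm n a) atTop
      (nhds (1 / (a : ℝ) ^ 2 - if a = 1 then 1 else 0)) := by
  rcases lt_or_ge a 2 with ha | ha
  · have : ∀ n, spTerm n a = 0 := fun n => if_neg (by omega)
    simp only [this]
    interval_cases a <;> simp
  · have ha0 : (0 : ℝ) < (a : ℝ) ^ 2 := by positivity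
    have hr : Tendsto (fun n : ℕ => (n : ℝ) / (a : ℝ) ^ 2) atTop atTop :=
      tendsto_natCast_atTop_atTop.atTop_div_const ha0
    have h1 := tendsto_primeCounting_mul_log_div
    have h2 : Tendsto (fun x : ℝ => (Nat.primeCounting ⌊x⌋₊ : ℝ) / x) atTop (nhds 0) := by
      have := h1.mul (tendsto_inv_atTop_zero.comp Real.tendsto_log_atTop)
      rw [mul_zero] at this
      refine this.congr' ?_
      filter_upwards [eventually_gt_atTop 1] with x hx
      have := Real.log_pos hx
      simp only [Function.comp]
      field_simp
    have h3 := (((h1.comp hr).add ((h2.comp hr).const_mul (2 * Real.log a))).const_mul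
      (1 / (a : ℝ) ^ 2))
    rw [mul_zero, add_zero, mul_one] at h3
    rw [if_neg (by omega), sub_zero]
    refine h3.congr' ?_
    filter_upwards [eventually_ne_atTop 0] with n hn
    rw [spTerm_eq ha hn]
    rfl

lemma primeCounting_floor_le {x : ℝ} (hx : 0 ≤ x) : (Nat.primeCounting ⌊x⌋₊ : ℝ) ≤ x := by
  refine le_trans ?_ (Nat.floor_le hx)
  have h := Finset.card_filter_le (Finset.Icc 1 ⌊x⌋₊) Nat.Prime
  rw [← Nat.primesLE_eq_filter_Icc_one, Nat.primesLE_card_eq_primeCounting, Nat.card_Icc,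
    Nat.add_sub_cancel] at h
  exact_mod_cast h

lemma exists_primeCounting_mul_log_le :
    ∃ C : ℝ, 0 ≤ C ∧ ∀ x : ℝ, 1 ≤ x →
      (Nat.primeCounting ⌊x⌋₊ : ℝ) * Real.log x / x ≤ C := by
  obtain ⟨X, hX⟩ := eventually_atTop.1
    (tendsto_primeCounting_mul_log_div.eventually_le_const one_lt_two)
  refine ⟨max 2 (Real.log X), le_max_of_le_left zero_le_two, fun x hx => ?_⟩
  -- Below the threshold `X`, the trivial bound `π(x) ≤ x` leaves only `log X`.
  rcases le_total X x with h | h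
  · exact (hX x h).trans (le_max_left _ _)
  · refine le_max_of_le_right ?_
    have hx0 : 0 < x := by linarith
    rw [div_le_iff₀ hx0, mul_comm]
    exact mul_le_mul (Real.log_le_log hx0 h) (primeCounting_floor_le hx0.le)
      (Nat.cast_nonneg _) (Real.log_nonneg (hx.trans h))

/-- The terms `spTerm n a` are `O(a ^ (-3 / 2))` uniformly in `n`: the factor `1 / a ^ 2` loses at most a
multiple of `log a`, which is `O(a ^ (1 / 2))`. -/
lemma exists_spTerm_bound :
    ∃ b : ℕ → ℝ, Summable b ∧ ∀ n, n ≠ 0 → ∀ a, ‖spTerm n a‖ ≤ b a := by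
  obtain ⟨C, hC0, hC⟩ := exists_primeCounting_mul_log_le
  refine ⟨fun a => C * (1 / (a : ℝ) ^ 2) + 4 * (1 / (a : ℝ) ^ (3 / 2 : ℝ)),
    ((Real.summable_one_div_nat_pow.2 one_lt_two).mul_left C).add
      ((Real.summable_one_div_nat_rpow.2 (by norm_num)).mul_left 4), fun n hn a => ?_⟩
  have hb : 0 ≤ C * (1 / (a : ℝ) ^ 2) + 4 * (1 / (a : ℝ) ^ (3 / 2 : ℝ)) := by positivity
  have hnn : 0 ≤ spTerm n a := by
    rw [spTerm]
    have := Real.log_natCast_nonneg n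
    split_ifs <;> positivity
  rw [Real.norm_of_nonneg hnn]
  rcases lt_or_ge a 2 with ha | ha
  · rwa [spTerm, if_neg (by omega)]
  have ha0 : (0 : ℝ) < a := by positivity
  -- For `n < a ^ 2` the term vanishes.
  rcases lt_or_ge n (a ^ 2) with hna | hna
  · rw [spTerm, if_pos ha, Nat.div_eq_of_lt hna]
    simpa using hb
  have hr : 1 ≤ (n : ℝ) / (a : ℝ) ^ 2 := by
    rw [one_le_div (by positivity)]
    exact_mod_cast hna
  have h1 := hC _ hr
  have h2 : (Nat.primeCounting ⌊(n : ℝ) / (a : ℝ) ^ 2⌋₊ : ℝ) / (n / (a : ℝ) ^ 2) ≤ 1 :=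
    div_le_one_of_le₀ (primeCounting_floor_le (by linarith)) (by linarith)
  have hlog : Real.log a ≤ 2 * (a : ℝ) ^ (1 / 2 : ℝ) := by
    have := Real.log_le_rpow_div ha0.le (ε := 1 / 2) (by norm_num)
    linarith
  have hlog0 : 0 ≤ Real.log a := Real.log_natCast_nonneg a
  have hpow : (a : ℝ) ^ (1 / 2 : ℝ) / (a : ℝ) ^ 2 = 1 / (a : ℝ) ^ (3 / 2 : ℝ) := by
    rw [← Real.rpow_natCast, ← Real.rpow_sub ha0, one_div ((a : ℝ) ^ (3 / 2 : ℝ)),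
      ← Real.rpow_neg ha0.le]
    norm_num
  rw [spTerm_eq ha hn]
  calc _ ≤ 1 / (a : ℝ) ^ 2 * (C + 4 * (a : ℝ) ^ (1 / 2 : ℝ)) := by
        refine mul_le_mul_of_nonneg_left (add_le_add h1 ?_) (by positivity)
        refine (mul_le_of_le_one_right (by positivity) h2).trans (by linarith)
    _ = _ := by beta_reduce; rw [← hpow]; ring

end SPProof

/-- `SP(n)` is asymptotic to `(ζ(2) - 1)·n/log n`, i.e. `SP(n)/(n/log n)`
converges to `ζ(2) - 1 = π²/6 - 1` as `n → ∞`. -/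
theorem SPCount_div_n_div_log_tendsto :
    Tendsto (fun n : ℕ => (SPCount n : ℝ) / ((n : ℝ) / Real.log n))
      atTop (nhds (Real.pi ^ 2 / 6 - 1)) := by
  obtain ⟨b, hb, hle⟩ := SPProof.exists_spTerm_bound
  have h := tendsto_tsum_of_dominated_convergence hb SPProof.tendsto_spTerm
    ((eventually_ne_atTop 0).mono hle)
  -- The sum of the limits over all `a` is `ζ(2)` minus the term at `a = 1`.
  rw [(hasSum_zeta_two.sub (hasSum_ite_eq 1 (1 : ℝ))).tsum_eq] at h
  exact h.congr fun n => (SPProof.SPCount_div_eq_tsum n).symm
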